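/- arXiv:math/0008181 — 3 statements merged into one kernel-verified Lean document; each statement's English description precedes it below -/
import Mathlib

section
/- Let A be a unital C*-algebra satisfying: for each finite F ⊂ A and ε > 0 there is a contractive completely positive map φ : A → B into a finite dimensional C*-algebra B with ‖φ(x)‖ ≥ ‖x‖ - ε for x ∈ F and ‖φ(xy) - φ(x)φ(y)‖ ≤ ε for x,y ∈ F. Then A satisfies the same condition with φ a unital completely positive map into a full matrix algebra M_n(ℂ). -/
open Filter Topology

/-- The algebra `B(ℂⁿ) ≅ Mₙ(ℂ)`. -/
abbrev MatOp (n : ℕ) := EuclideanSpace ℂ (Fin n) →L[ℂ] EuclideanSpace ℂ (Fin n)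

/-- Complete positivity of a linear map into `Mₙ(ℂ)`. -/
def IsCPIntoMat {A : Type*} [NonUnitalNormedRing A] [StarRing A] [Module ℂ A] {n : ℕ}
    (φ : A →ₗ[ℂ] MatOp n) : Prop :=
  ∀ (k : ℕ) (a : Fin k → A) (c : Fin k → MatOp n),
    (∑ i, ∑ j, star (c i) * φ (star (a i) * a j) * c j).IsPositive

/-!
Approximate multiplicativity at `1` makes `b = φ(1)` almost idempotent, so its spectrum lies near
`{0, 1}` and misses `1 / 2`. Hence `g = f(b)`, with `f(t) = t^(-1/2)` for `t > 1 / 2` and `f(t) = 0`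
below, is available by continuous functional calculus: `p = g b g` is a projection and `g²` is
close to `b`. Factor `p = V V*` through an isometry `V : ℂⁿ → ℂᵐ` and compress by `W = g V`: the map
`a ↦ W* φ(a) W` is completely positive and sends `1` to `V* p V = 1`. Since `W W* = g²` is close to
`φ(1)`, which almost acts as a unit on `φ(F)`, this compression almost preserves norms and products.
-/

open ContinuousLinearMap

section Compression

variable {𝕜 E F : Type*} [RCLike 𝕜] [NormedAddCommGroup E] [InnerProductSpace 𝕜 E]
  [CompleteSpace E] [NormedAddCommGroup F] [InnerProductSpace 𝕜 F] [CompleteSpace F]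

/-- The compression `X ↦ W* X W` of operators on `F` to operators on `E` along `W : E → F`. -/
noncomputable def compress (W : E →L[𝕜] F) : (F →L[𝕜] F) →ₗ[𝕜] E →L[𝕜] E where
  toFun X := adjoint W ∘L X ∘L W
  map_add' X Y := by simp
  map_smul' c X := by simp

theorem compress_apply (W : E →L[𝕜] F) (X : F →L[𝕜] F) :
    compress W X = adjoint W ∘L X ∘L W := rfl

theorem compress_adjoint_compress (W : E →L[𝕜] F) (X : F →L[𝕜] F) :
    compress (adjoint W) (compress W X) = (W ∘L adjoint W) * X * (W ∘L adjoint W) := by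
  ext x
  simp [compress_apply]

theorem norm_comp_adjoint_self (W : E →L[𝕜] F) : ‖W ∘L adjoint W‖ = ‖W‖ ^ 2 := by
  simpa [sq] using norm_adjoint_comp_self (adjoint W)

theorem norm_compress_le (W : E →L[𝕜] F) (X : F →L[𝕜] F) : ‖compress W X‖ ≤ ‖W‖ ^ 2 * ‖X‖ :=
  calc ‖compress W X‖ ≤ ‖adjoint W‖ * (‖X‖ * ‖W‖) :=
        (opNorm_comp_le _ _).trans (by gcongr; exact opNorm_comp_le _ _)
    _ = ‖W‖ ^ 2 * ‖X‖ := by rw [LinearIsometryEquiv.norm_map]; ring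

theorem norm_compress_sub_compress_mul_compress_le (W : E →L[𝕜] F) (X Y Z : F →L[𝕜] F) :
    ‖compress W Z - compress W X * compress W Y‖ ≤
      ‖W‖ ^ 2 * (‖Z - X * Y‖ + ‖X‖ * ‖(W ∘L adjoint W) * Y - Y‖) := by
  have factor : compress W Z - compress W X * compress W Y =
      compress W (Z - X * Y - X * ((W ∘L adjoint W) * Y - Y)) := by
    ext x
    simp [compress_apply]
  rw [factor]
  refine (norm_compress_le W _).trans ?_
  gcongr
  exact (norm_sub_le _ _).trans (by gcongr; exact norm_mul_le _ _)

theorem norm_le_norm_compress_add (W : E →L[𝕜] F) (X : F →L[𝕜] F) :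
    ‖X‖ ≤ ‖W‖ ^ 2 * ‖compress W X‖ +
      (‖(W ∘L adjoint W) * X - X‖ * ‖W‖ ^ 2 + ‖X * (W ∘L adjoint W) - X‖) := by
  set G := W ∘L adjoint W
  have split : X = compress (adjoint W) (compress W X) - ((G * X - X) * G + (X * G - X)) := by
    rw [compress_adjoint_compress]
    noncomm_ring
  have main : ‖compress (adjoint W) (compress W X)‖ ≤ ‖W‖ ^ 2 * ‖compress W X‖ := by
    simpa using norm_compress_le (adjoint W) (compress W X)
  have error : ‖(G * X - X) * G + (X * G - X)‖ ≤ ‖G * X - X‖ * ‖W‖ ^ 2 + ‖X * G - X‖ := by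
    rw [← norm_comp_adjoint_self]
    exact (norm_add_le _ _).trans (by gcongr; exact norm_mul_le _ _)
  calc ‖X‖ = _ := congrArg norm split
    _ ≤ _ := (norm_sub_le _ _).trans (add_le_add main error)

theorem norm_le_norm_compress_add_of_le {W : E →L[𝕜] F} {X : F →L[𝕜] F} {r η κ : ℝ} (hη : 0 ≤ η)
    (hη1 : η ≤ 1) (hW : ‖W‖ ^ 2 ≤ 1 + η) (hX : ‖X‖ ≤ r)
    (hleft : ‖(W ∘L adjoint W) * X - X‖ ≤ κ) (hright : ‖X * (W ∘L adjoint W) - X‖ ≤ κ) :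
    ‖X‖ ≤ ‖compress W X‖ + 2 * r * η + 3 * κ := by
  have hW2 : ‖W‖ ^ 2 ≤ 2 := by linarith
  have hcompress : ‖compress W X‖ ≤ 2 * r := (norm_compress_le W X).trans (by gcongr)
  have hκ : 0 ≤ κ := (norm_nonneg _).trans hleft
  calc ‖X‖ ≤ _ := norm_le_norm_compress_add W X
    _ ≤ (1 + η) * ‖compress W X‖ + (κ * 2 + κ) := by gcongr
    _ = ‖compress W X‖ + ‖compress W X‖ * η + 3 * κ := by ring
    _ ≤ ‖compress W X‖ + 2 * r * η + 3 * κ := by gcongr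

end Compression

theorem exists_comp_adjoint_eq_of_isStarProjection {𝕜 E : Type*} [RCLike 𝕜] [NormedAddCommGroup E]
    [InnerProductSpace 𝕜 E] [FiniteDimensional 𝕜 E] [CompleteSpace E] {p : E →L[𝕜] E}
    (hp : IsStarProjection p) :
    ∃ (n : ℕ) (V : EuclideanSpace 𝕜 (Fin n) →L[𝕜] E),
      adjoint V ∘L V = 1 ∧ V ∘L adjoint V = p := by
  obtain ⟨K, _, rfl⟩ := isStarProjection_iff_eq_starProjection.mp hp
  let u := (stdOrthonormalBasis 𝕜 K).repr.symm
  let V := K.subtypeL ∘L u.toContinuousLinearEquiv.toContinuousLinearMap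
  have hV : adjoint V =
      u.symm.toContinuousLinearEquiv.toContinuousLinearMap ∘L K.orthogonalProjectionOnto := by
    rw [adjoint_comp, Submodule.adjoint_subtypeL, LinearIsometryEquiv.adjoint_eq_symm]
  refine ⟨_, V, ?_, ?_⟩ <;> ext1 x <;> simp [hV, V]

section ApproximateUnit

variable {R : Type*} [NonUnitalSeminormedRing R]

theorem norm_mul_sub_self_le (g b x : R) :
    ‖g * x - x‖ ≤ ‖g - b‖ * ‖x‖ + ‖x - b * x‖ :=
  calc ‖g * x - x‖ = ‖(g - b) * x - (x - b * x)‖ := by rw [sub_mul]; abel_nf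
    _ ≤ ‖g - b‖ * ‖x‖ + ‖x - b * x‖ :=
      (norm_sub_le _ _).trans (by gcongr; exact norm_mul_le _ _)

theorem norm_self_mul_sub_le (g b x : R) :
    ‖x * g - x‖ ≤ ‖x‖ * ‖g - b‖ + ‖x - x * b‖ :=
  calc ‖x * g - x‖ = ‖x * (g - b) - (x - x * b)‖ := by rw [mul_sub]; abel_nf
    _ ≤ ‖x‖ * ‖g - b‖ + ‖x - x * b‖ :=
      (norm_sub_le _ _).trans (by gcongr; exact norm_mul_le _ _)

end ApproximateUnit

section TruncRsqrt

/-- The function `t ↦ t^(-1/2)`, set to `0` for `t ≤ 1/2`. Applied to `b = φ(1)` by functional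
calculus it gives `b^(-1/2) P`, with `P` the spectral projection of `b` for `(1/2, ∞)`. -/
noncomputable def truncRsqrt (t : ℝ) : ℝ := if 1 / 2 < t then (√t)⁻¹ else 0

theorem truncRsqrt_mul_self (t : ℝ) :
    truncRsqrt t * truncRsqrt t = if 1 / 2 < t then t⁻¹ else 0 := by
  unfold truncRsqrt
  split_ifs with ht
  · rw [← mul_inv, Real.mul_self_sqrt (by linarith)]
  · simp

theorem continuousOn_truncRsqrt : ContinuousOn truncRsqrt {1 / 2}ᶜ := by
  have frontier_empty (t : ℝ) (ht : t ∈ ({1 / 2}ᶜ : Set ℝ) ∩ frontier {t | 1 / 2 < t}) : False :=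
    ht.1 (frontier_Ioi.subset ht.2)
  refine ContinuousOn.if' (fun t ht => (frontier_empty t ht).elim)
    (fun t ht => (frontier_empty t ht).elim) ?_ continuousOn_const
  refine Real.continuous_sqrt.continuousOn.inv₀ fun t ht => ?_
  have : (1 / 2 : ℝ) < t := ht.2
  positivity

theorem truncRsqrt_quasi_inverse (t : ℝ) :
    truncRsqrt t * (truncRsqrt t * t * truncRsqrt t) = truncRsqrt t := by
  rw [mul_right_comm, truncRsqrt_mul_self, truncRsqrt]
  split_ifs with ht
  · rw [inv_mul_cancel₀ (by linarith), mul_one]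
  · simp

theorem abs_truncRsqrt_mul_self_sub_le (t : ℝ) :
    |truncRsqrt t * truncRsqrt t - t| ≤ 6 * |t - t * t| := by
  rw [truncRsqrt_mul_self]
  split_ifs with ht
  · have pos : 0 < t := by linarith
    have inv_le : t⁻¹ ≤ 2 := by rw [inv_le_comm₀ pos two_pos]; linarith
    calc |t⁻¹ - t| = (t⁻¹ * t⁻¹ + t⁻¹) * |t - t * t| := by
          rw [← abs_of_pos (show 0 < t⁻¹ * t⁻¹ + t⁻¹ by positivity), ← abs_mul]
          congr 1
          field_simp
          ring
      _ ≤ (2 * 2 + 2) * |t - t * t| := by gcongr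
      _ = 6 * |t - t * t| := by norm_num
  · have : 1 / 2 ≤ |1 - t| := le_abs.2 (Or.inl (by linarith))
    calc |0 - t| ≤ 6 * (|t| * (1 / 2)) := by rw [zero_sub, abs_neg]; linarith [abs_nonneg t]
      _ ≤ 6 * (|t| * |1 - t|) := by gcongr
      _ = 6 * |t - t * t| := by rw [← abs_mul]; ring_nf

theorem truncRsqrt_mul_self_le (t : ℝ) : truncRsqrt t * truncRsqrt t ≤ 1 + 4 * |t - t * t| := by
  rw [truncRsqrt_mul_self]
  split_ifs with ht
  · have pos : 0 < t := by linarith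
    have inv_le : t⁻¹ ≤ 2 := by rw [inv_le_comm₀ pos two_pos]; linarith
    calc t⁻¹ = 1 + t⁻¹ * t⁻¹ * (t - t * t) := by field_simp; ring
      _ ≤ 1 + t⁻¹ * t⁻¹ * |t - t * t| := by gcongr; exact le_abs_self _
      _ ≤ 1 + 2 * 2 * |t - t * t| := by gcongr
      _ = 1 + 4 * |t - t * t| := by norm_num
  · positivity

end TruncRsqrt

section AlmostIdempotent

variable {B : Type*} [CStarAlgebra B] {b : B}

theorem abs_sub_mul_self_le_of_mem_spectrum (hb : IsSelfAdjoint b) {t : ℝ}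
    (ht : t ∈ spectrum ℝ b) : |t - t * t| ≤ ‖b - b * b‖ := by
  have : cfc (fun t : ℝ => t - t * t) b = b - b * b := by
    rw [cfc_sub .., cfc_mul .., cfc_id' ℝ b]
  simpa [this] using norm_apply_le_norm_cfc (fun t : ℝ => t - t * t) b ht

theorem continuousOn_truncRsqrt_spectrum (hb : IsSelfAdjoint b) (h : ‖b - b * b‖ < 1 / 4) :
    ContinuousOn truncRsqrt (spectrum ℝ b) := by
  refine continuousOn_truncRsqrt.mono ?_
  rintro t ht rfl
  have := abs_sub_mul_self_le_of_mem_spectrum hb ht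
  norm_num at this
  linarith

theorem exists_rsqrt_of_norm_sub_mul_self_lt (hb : IsSelfAdjoint b)
    (h : ‖b - b * b‖ < 1 / 4) :
    ∃ g : B, IsSelfAdjoint g ∧ g * (g * b * g) = g ∧
      ‖g * g - b‖ ≤ 6 * ‖b - b * b‖ ∧ ‖g * g‖ ≤ 1 + 4 * ‖b - b * b‖ := by
  have cont := continuousOn_truncRsqrt_spectrum hb h
  have sq_eq : cfc truncRsqrt b * cfc truncRsqrt b =
      cfc (fun t => truncRsqrt t * truncRsqrt t) b := (cfc_mul ..).symm
  refine ⟨cfc truncRsqrt b, cfc_predicate _ b, ?_, ?_, ?_⟩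
  · nth_rewrite 3 [← cfc_id' ℝ b]
    rw [← cfc_mul .., ← cfc_mul .., ← cfc_mul ..]
    simp only [truncRsqrt_quasi_inverse]
  · nth_rewrite 3 [← cfc_id' ℝ b]
    rw [sq_eq, ← cfc_sub ..]
    exact norm_cfc_le (by positivity) fun t ht => (abs_truncRsqrt_mul_self_sub_le t).trans
      (by gcongr; exact abs_sub_mul_self_le_of_mem_spectrum hb ht)
  · rw [sq_eq]
    refine norm_cfc_le (by positivity) fun t ht => ?_
    rw [Real.norm_of_nonneg (mul_self_nonneg _)]
    exact (truncRsqrt_mul_self_le t).trans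
      (by gcongr; exact abs_sub_mul_self_le_of_mem_spectrum hb ht)

theorem exists_compress_eq_one {E : Type*} [NormedAddCommGroup E] [InnerProductSpace ℂ E]
    [FiniteDimensional ℂ E] [CompleteSpace E] {b : E →L[ℂ] E} (hb : IsSelfAdjoint b)
    (h : ‖b - b * b‖ < 1 / 4) :
    ∃ (n : ℕ) (W : EuclideanSpace ℂ (Fin n) →L[ℂ] E), compress W b = 1 ∧
      ‖W ∘L adjoint W - b‖ ≤ 6 * ‖b - b * b‖ ∧ ‖W‖ ^ 2 ≤ 1 + 4 * ‖b - b * b‖ := by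
  obtain ⟨g, hg, hgbg, hgb, hgg⟩ := exists_rsqrt_of_norm_sub_mul_self_lt hb h
  have proj : IsStarProjection (g * b * g) :=
    ⟨by rw [IsIdempotentElem, mul_assoc (g * b), hgbg], by
      simpa [hg.star_eq] using hb.conjugate g⟩
  obtain ⟨n, V, hV, hVp⟩ := exists_comp_adjoint_eq_of_isStarProjection proj
  have hW : (g ∘L V) ∘L adjoint (g ∘L V) = g * g :=
    calc (g ∘L V) ∘L adjoint (g ∘L V) = g * (V ∘L adjoint V) * g := by
          rw [adjoint_comp, hg.adjoint_eq]; rfl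
      _ = g * g := by rw [hVp, hgbg]
  refine ⟨n, g ∘L V, ?_, by rwa [hW], by rwa [← norm_comp_adjoint_self, hW]⟩
  calc compress (g ∘L V) b = adjoint V ∘L (g * b * g) ∘L V := by
        rw [compress_apply, adjoint_comp, hg.adjoint_eq]; rfl
    _ = (adjoint V ∘L V) ∘L (adjoint V ∘L V) := by rw [← hVp]; rfl
    _ = 1 := by rw [hV]; rfl

end AlmostIdempotent

section CompletelyPositive

open scoped ComplexOrder

theorem isPositive_iff_forall_inner_nonneg {E : Type*} [NormedAddCommGroup E]
    [InnerProductSpace ℂ E] {T : E →L[ℂ] E} :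
    T.IsPositive ↔ ∀ x, 0 ≤ inner ℂ x (T x) := by
  refine ⟨fun hT => hT.inner_nonneg_right, fun h => (isPositive_iff_complex T).2 fun x => ?_⟩
  have hx : 0 ≤ inner ℂ (T x) x := by
    rw [← inner_conj_symm]
    exact star_nonneg_iff.2 (h x)
  exact ⟨Complex.ext rfl (Complex.nonneg_iff.1 hx).2, (Complex.nonneg_iff.1 hx).1⟩

variable {A : Type*} {m n : ℕ}

theorem isCPIntoMat_iff_sum_inner_nonneg [NonUnitalNormedRing A] [StarRing A] [Module ℂ A]
    {φ : A →ₗ[ℂ] MatOp m} :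
    IsCPIntoMat φ ↔ ∀ (k : ℕ) (a : Fin k → A) (v : Fin k → EuclideanSpace ℂ (Fin m)),
      0 ≤ ∑ i, ∑ j, inner ℂ (v i) (φ (star (a i) * a j) (v j)) := by
  have inner_apply (k : ℕ) (a : Fin k → A) (c : Fin k → MatOp m) (x : EuclideanSpace ℂ (Fin m)) :
      inner ℂ x ((∑ i, ∑ j, star (c i) * φ (star (a i) * a j) * c j) x) =
        ∑ i, ∑ j, inner ℂ (c i x) (φ (star (a i) * a j) (c j x)) := by
    simp [sum_apply, star_eq_adjoint, adjoint_inner_right]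
  simp only [IsCPIntoMat, isPositive_iff_forall_inner_nonneg, inner_apply]
  refine ⟨fun h k a v => ?_, fun h k a c x => h k a fun i => c i x⟩
  rcases subsingleton_or_nontrivial (EuclideanSpace ℂ (Fin m)) with _ | _
  · simp [Subsingleton.elim (v _) 0]
  · obtain ⟨u, hu⟩ := exists_norm_eq (EuclideanSpace ℂ (Fin m)) zero_le_one
    simpa [inner_self_eq_norm_sq_to_K, hu] using
      h k a (fun i => InnerProductSpace.rankOne ℂ (v i) u) u

theorem IsCPIntoMat.compress_comp [NonUnitalNormedRing A] [StarRing A] [Module ℂ A]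
    {φ : A →ₗ[ℂ] MatOp m} (hφ : IsCPIntoMat φ)
    (W : EuclideanSpace ℂ (Fin n) →L[ℂ] EuclideanSpace ℂ (Fin m)) :
    IsCPIntoMat (compress W ∘ₗ φ) := by
  rw [isCPIntoMat_iff_sum_inner_nonneg] at hφ ⊢
  intro k a v
  simpa [compress_apply, adjoint_inner_right] using hφ k a fun i => W (v i)

variable [NormedRing A] [StarRing A] [Module ℂ A]

theorem IsCPIntoMat.isPositive_map_one {φ : A →ₗ[ℂ] MatOp m} (hφ : IsCPIntoMat φ) :
    (φ 1).IsPositive := by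
  simpa using hφ 1 (fun _ => 1) (fun _ => 1)

theorem IsCPIntoMat.exists_unital_compression {φ : A →ₗ[ℂ] MatOp m} (hφ : IsCPIntoMat φ) {F : Set A}
    (hF : 1 ∈ F) {R δ : ℝ} (hR : 1 ≤ R) (hφR : ∀ x ∈ F, ‖φ x‖ ≤ R) (hδ : δ < 1 / 4)
    (hmul : ∀ x ∈ F, ∀ y ∈ F, ‖φ (x * y) - φ x * φ y‖ ≤ δ) :
    ∃ (n : ℕ) (ψ : A →ₗ[ℂ] MatOp n), ψ 1 = 1 ∧ IsCPIntoMat ψ ∧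
      (∀ x ∈ F, ‖φ x‖ - 29 * R * δ ≤ ‖ψ x‖) ∧
      ∀ x ∈ F, ∀ y ∈ F, ‖ψ (x * y) - ψ x * ψ y‖ ≤ 16 * R ^ 2 * δ := by
  have hone : ‖φ 1 - φ 1 * φ 1‖ ≤ δ := by simpa using hmul 1 hF 1 hF
  have hδ0 : 0 ≤ δ := (norm_nonneg _).trans hone
  obtain ⟨n, W, hW1, hWb, hW⟩ :=
    exists_compress_eq_one hφ.isPositive_map_one.isSelfAdjoint (hone.trans_lt hδ)
  have hWφ : ‖W ∘L adjoint W - φ 1‖ ≤ 6 * δ := hWb.trans (by gcongr)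
  have hW4 : ‖W‖ ^ 2 ≤ 1 + 4 * δ := hW.trans (by gcongr)
  have hδR : δ ≤ R * δ := le_mul_of_one_le_left hδ0 hR
  have left (x) (hx : x ∈ F) : ‖(W ∘L adjoint W) * φ x - φ x‖ ≤ 7 * R * δ :=
    calc _ ≤ ‖W ∘L adjoint W - φ 1‖ * ‖φ x‖ + ‖φ x - φ 1 * φ x‖ := norm_mul_sub_self_le _ _ _
      _ ≤ 6 * δ * R + δ := by
        gcongr
        exacts [hφR x hx, by simpa using hmul 1 hF x hx]
      _ ≤ 7 * R * δ := by linarith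
  have right (x) (hx : x ∈ F) : ‖φ x * (W ∘L adjoint W) - φ x‖ ≤ 7 * R * δ :=
    calc _ ≤ ‖φ x‖ * ‖W ∘L adjoint W - φ 1‖ + ‖φ x - φ x * φ 1‖ := norm_self_mul_sub_le _ _ _
      _ ≤ R * (6 * δ) + δ := by
        gcongr
        exacts [hφR x hx, by simpa using hmul x hx 1 hF]
      _ ≤ 7 * R * δ := by linarith
  refine ⟨n, compress W ∘ₗ φ, hW1, hφ.compress_comp W, fun x hx => ?_, fun x hx y hy => ?_⟩
  · have := norm_le_norm_compress_add_of_le (by positivity) (by linarith) hW4 (hφR x hx)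
      (left x hx) (right x hx)
    rw [LinearMap.comp_apply]
    linarith
  · have hW2 : ‖W‖ ^ 2 ≤ 2 := by linarith
    calc _ ≤ _ := norm_compress_sub_compress_mul_compress_le W (φ x) (φ y) (φ (x * y))
      _ ≤ 2 * (δ + R * (7 * R * δ)) := by
        gcongr
        exacts [hmul x hx y hy, hφR x hx, left y hy]
      _ ≤ 2 * (R ^ 2 * δ + R * (7 * R * δ)) := by
        gcongr
        exact le_mul_of_one_le_left hδ0 (one_le_pow₀ hR)
      _ = 16 * R ^ 2 * δ := by ring

theorem star_star_of_star_general
    (h : ∀ (F : Finset A) (ε : ℝ), 0 < ε →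
      ∃ (m : ℕ) (φ : A →ₗ[ℂ] MatOp m),
        (∀ x ∈ F, ‖φ x‖ ≤ ‖x‖) ∧ IsCPIntoMat φ ∧
        (∀ x ∈ F, ‖x‖ - ε ≤ ‖φ x‖) ∧
        ∀ x ∈ F, ∀ y ∈ F, ‖φ (x * y) - φ x * φ y‖ ≤ ε) :
    ∀ (F : Finset A) (ε : ℝ), 0 < ε →
      ∃ (n : ℕ) (φ : A →ₗ[ℂ] MatOp n),
        φ 1 = 1 ∧ IsCPIntoMat φ ∧
        (∀ x ∈ F, ‖x‖ - ε ≤ ‖φ x‖) ∧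
        ∀ x ∈ F, ∀ y ∈ F, ‖φ (x * y) - φ x * φ y‖ ≤ ε := by
  classical
  intro F ε hε
  let F₁ := insert 1 F
  obtain ⟨M, hM⟩ := (F₁.image norm).exists_le
  let R := max 1 M
  have hR : 1 ≤ R := le_max_left 1 M
  have hFR : ∀ x ∈ F₁, ‖x‖ ≤ R := fun x hx =>
    (hM _ (Finset.mem_image_of_mem norm hx)).trans (le_max_right 1 M)
  obtain ⟨δ, hδ, hδlt, hδε⟩ : ∃ δ : ℝ, 0 < δ ∧ δ < 1 / 4 ∧ 30 * R ^ 2 * δ ≤ ε := by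
    refine ⟨min (1 / 5) (ε / (30 * R ^ 2)), by positivity, by norm_num, ?_⟩
    rw [← le_div_iff₀' (by positivity)]
    exact min_le_right _ _
  obtain ⟨m, φ, hcontr, hcp, hiso, hmul⟩ := h F₁ δ hδ
  obtain ⟨n, ψ, hψ1, hψ, hψiso, hψmul⟩ := hcp.exists_unital_compression (F := F₁) (by simp [F₁]) hR
    (fun x hx => (hcontr x hx).trans (hFR x hx)) hδlt hmul
  have sub (x) (hx : x ∈ F) : x ∈ F₁ := Finset.mem_insert_of_mem hx
  refine ⟨n, ψ, hψ1, hψ, fun x hx => ?_, fun x hx y hy => ?_⟩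
  · have hRδ : R * δ ≤ R ^ 2 * δ := by gcongr; exact le_self_pow₀ hR two_ne_zero
    have hδR : δ ≤ R ^ 2 * δ := le_mul_of_one_le_left hδ.le (one_le_pow₀ hR)
    linarith [hiso x (sub x hx), hψiso x (sub x hx)]
  · have : 0 ≤ R ^ 2 * δ := by positivity
    linarith [hψmul x (sub x hx) y (sub y hy)]

end CompletelyPositive

/-- Voiculescu's `(∗)` implies `(∗∗)`: if for every finite `F ⊆ A` and `ε > 0` there is a
contractive completely positive map into a finite dimensional `C*`-algebra (realized as a
star subalgebra of some `Mₘ(ℂ)`) which is `ε`-isometric and `ε`-multiplicative on `F`,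
then for every finite `F` and `ε > 0` there is a *unital* completely positive map into a
full matrix algebra `Mₙ(ℂ)` with the same properties. -/
theorem star_star_of_star {A : Type*} [CStarAlgebra A]
    (h : ∀ (F : Finset A) (ε : ℝ), 0 < ε →
      ∃ (m : ℕ) (S : StarSubalgebra ℂ (MatOp m)) (φ : A →ₗ[ℂ] MatOp m),
        (∀ a : A, φ a ∈ S) ∧ (∀ a : A, ‖φ a‖ ≤ ‖a‖) ∧ IsCPIntoMat φ ∧
        (∀ x ∈ F, ‖x‖ - ε ≤ ‖φ x‖) ∧
        ∀ x ∈ F, ∀ y ∈ F, ‖φ (x * y) - φ x * φ y‖ ≤ ε) :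
    ∀ (F : Finset A) (ε : ℝ), 0 < ε →
      ∃ (n : ℕ) (φ : A →ₗ[ℂ] MatOp n),
        φ 1 = 1 ∧ IsCPIntoMat φ ∧
        (∀ x ∈ F, ‖x‖ - ε ≤ ‖φ x‖) ∧
        ∀ x ∈ F, ∀ y ∈ F, ‖φ (x * y) - φ x * φ y‖ ≤ ε :=
  star_star_of_star_general fun F ε hε =>
    let ⟨m, _, φ, _, hcontr, hcp, hiso, hmul⟩ := h F ε hε
    ⟨m, φ, fun x _ => hcontr x, hcp, hiso, hmul⟩
end

section
/- Let 0 → I → E → B → 0 be a quasidiagonal extension (I has an approximate unit of projections quasicentral in E) with both I and B quasidiagonal C*-algebras. Then E is quasidiagonal. -/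
open Filter Topology

/-- Voiculescu's abstract characterization of quasidiagonality: for every finite set `F`
and `ε > 0` there is a contractive completely positive map into a finite dimensional
`C*`-algebra (a star subalgebra of some matrix algebra) which is `ε`-isometric and
`ε`-multiplicative on `F`. -/
def VQD (A : Type*) [NonUnitalNormedRing A] [StarRing A] [Module ℂ A] : Prop :=
  ∀ (F : Finset A) (ε : ℝ), 0 < ε →
    ∃ (m : ℕ) (S : StarSubalgebra ℂ (MatOp m)) (φ : A →ₗ[ℂ] MatOp m),
      (∀ a : A, φ a ∈ S) ∧ (∀ a : A, ‖φ a‖ ≤ ‖a‖) ∧ IsCPIntoMat φ ∧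
      (∀ x ∈ F, ‖x‖ - ε ≤ ‖φ x‖) ∧
      ∀ x ∈ F, ∀ y ∈ F, ‖φ (x * y) - φ x * φ y‖ ≤ ε

/-! Compress to the corner of a projection `p` of the approximate unit and consider
`φ x = p x p ⊕ π x` in `I ⊕ B`, a completely positive contraction. The defect of multiplicativity
`p x y p - p x p y p = p x (y p - p y) p` vanishes by quasicentrality. Up to a commutator, `x` is
the orthogonal sum of `p x p` and `(1 - p) x (1 - p)`, and the second corner is asymptotically
bounded by `‖π x‖`, because `1 - p` asymptotically annihilates `I`; hence `φ` is asymptotically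
isometric. Finally `I ⊕ B` is quasidiagonal through block diagonal matrices. -/

section Corners

variable {A : Type*}

lemma norm_add_eq_max_of_star_mul_eq_zero [NonUnitalCStarAlgebra A] {a b : A}
    (h₁ : star a * b = 0) (h₂ : a * star b = 0) : ‖a + b‖ = max ‖a‖ ‖b‖ := by
  have hba : star b * a = 0 := by simpa using congr(star $h₁)
  have hab : (star a * a) * (star b * b) = 0 := by
    rw [mul_assoc, ← mul_assoc a, h₂, zero_mul, mul_zero]
  have hsum : star (a + b) * (a + b) = star a * a + star b * b := by
    simp only [star_add, add_mul, mul_add, h₁, hba, add_zero, zero_add]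
  have hsq : ‖a + b‖ ^ 2 = max (‖a‖ ^ 2) (‖b‖ ^ 2) := by
    simp only [sq, ← CStarRing.norm_star_mul_self, hsum]
    exact (IsSelfAdjoint.star_mul_self a).norm_add_eq_max (.star_mul_self b) hab
  rw [← pow_left_monotoneOn.map_max (norm_nonneg a) (norm_nonneg b)] at hsq
  exact (sq_eq_sq₀ (norm_nonneg _) (le_max_of_le_left (norm_nonneg a))).mp hsq

lemma norm_corner_le [NonUnitalNormedRing A] [StarRing A] [CStarRing A] {p : A}
    (hp : IsStarProjection p) (x : A) : ‖p * x * p‖ ≤ ‖x‖ :=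
  calc ‖p * x * p‖ ≤ ‖p‖ * ‖x‖ * ‖p‖ := norm_mul₃_le
    _ ≤ 1 * ‖x‖ * 1 := by gcongr <;> exact hp.norm_le
    _ = ‖x‖ := by ring

lemma norm_corner_mul_sub_le [NonUnitalNormedRing A] [StarRing A] [CStarRing A] {p : A}
    (hp : IsStarProjection p) (x y : A) :
    ‖p * (x * y) * p - (p * x * p) * (p * y * p)‖ ≤ ‖x‖ * ‖p * y - y * p‖ := by
  have hpp (z : A) : p * (p * z) = p * z := by rw [← mul_assoc, hp.isIdempotentElem.eq]
  have h : p * (x * y) * p - (p * x * p) * (p * y * p) = p * (x * (y * p - p * y)) * p := by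
    simp only [mul_sub, sub_mul, mul_assoc, hpp, hp.isIdempotentElem.eq]
  rw [h, norm_sub_rev (p * y)]
  exact (norm_corner_le hp _).trans (norm_mul_le _ _)

lemma norm_corner_sq_le [NonUnitalNormedRing A] [StarRing A] [CStarRing A] {q : A}
    (hq : IsStarProjection q) (x y : A) : ‖q * x * q‖ ^ 2 ≤ ‖star x * x - y‖ + ‖q * y‖ := by
  have hqq : ‖q‖ ≤ 1 := hq.norm_le
  calc ‖q * x * q‖ ^ 2 ≤ ‖x * q‖ ^ 2 := by
        gcongr
        rw [mul_assoc]
        exact (norm_mul_le _ _).trans (mul_le_of_le_one_left (norm_nonneg _) hqq)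
    _ = ‖q * (star x * x) * q‖ := by
        rw [sq, ← CStarRing.norm_star_mul_self, star_mul, hq.isSelfAdjoint.star_eq]
        simp only [mul_assoc]
    _ = ‖q * (star x * x - y) * q + q * y * q‖ := by
        simp only [mul_sub, sub_mul, sub_add_cancel]
    _ ≤ ‖q * (star x * x - y) * q‖ + ‖q * y * q‖ := norm_add_le _ _
    _ ≤ ‖star x * x - y‖ + ‖q * y‖ :=
        add_le_add (norm_corner_le hq _)
          ((norm_mul_le _ _).trans (mul_le_of_le_one_right (norm_nonneg _) hqq))

lemma norm_le_max_norm_corners_add [CStarAlgebra A] {p : A} (hp : IsStarProjection p) (x : A) :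
    ‖x‖ ≤ max ‖p * x * p‖ ‖(1 - p) * x * (1 - p)‖ + ‖p * x - x * p‖ := by
  have hps : star p = p := hp.isSelfAdjoint.star_eq
  have hpq : p * (1 - p) = 0 := hp.mul_one_sub_self
  have hpp (z : A) : p * (p * z) = p * z := by rw [← mul_assoc, hp.isIdempotentElem.eq]
  have hdiag : ‖p * x * p + (1 - p) * x * (1 - p)‖ =
      max ‖p * x * p‖ ‖(1 - p) * x * (1 - p)‖ := by
    apply norm_add_eq_max_of_star_mul_eq_zero
    · simp only [star_mul, hps, mul_assoc]
      rw [← mul_assoc p (1 - p), hpq, zero_mul, mul_zero, mul_zero]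
    · simp only [star_mul, star_sub, star_one, hps, mul_assoc]
      rw [← mul_assoc p (1 - p), hpq, zero_mul, mul_zero, mul_zero]
  -- The off-diagonal part is the commutator rotated by the symmetry `2 * p - 1`.
  have hoff : x - (p * x * p + (1 - p) * x * (1 - p)) = (2 * p - 1) * (p * x - x * p) := by
    simp only [two_mul, mul_sub, sub_mul, add_mul, mul_one, one_mul, mul_assoc, hpp]
    abel
  calc ‖x‖ ≤ ‖p * x * p + (1 - p) * x * (1 - p)‖ +
        ‖x - (p * x * p + (1 - p) * x * (1 - p))‖ := norm_le_norm_add_norm_sub' _ _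
    _ = _ := by
      rw [hdiag, hoff, CStarRing.norm_mem_unitary_mul _ hp.two_mul_sub_one_mem_unitary]

/-- With `y` in an ideal of which `p` runs through an approximate unit, `p * y - y` tends to `0`,
and `‖star x * x - y‖` can be made the square of the norm of `x` modulo the ideal. -/
lemma norm_le_max_norm_corner_sqrt_add [NonUnitalCStarAlgebra A] {p : A} (hp : IsStarProjection p)
    (x y : A) :
    ‖x‖ ≤ max ‖p * x * p‖ √(‖star x * x - y‖ + ‖p * y - y‖) + ‖p * x - x * p‖ := by
  let j : A →⋆ₙₐ[ℂ] Unitization ℂ A := Unitization.inrNonUnitalStarAlgHom ℂ A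
  have hj (z : A) : ‖j z‖ = ‖z‖ := Unitization.norm_inr z
  have hjp : IsStarProjection (j p) := hp.map j
  have hsq : ‖(1 - j p) * j x * (1 - j p)‖ ^ 2 ≤ ‖star x * x - y‖ + ‖p * y - y‖ := by
    have h := norm_corner_sq_le hjp.one_sub (j x) (j y)
    rwa [sub_mul 1 _ (j y), one_mul (j y), norm_sub_rev (j y), ← map_star, ← map_mul, ← map_mul,
      ← map_sub, ← map_sub, hj, hj] at h
  have h := norm_le_max_norm_corners_add hjp (j x)
  simp only [← map_mul, ← map_sub, hj] at h
  refine h.trans ?_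
  gcongr
  exact Real.le_sqrt_of_sq_le hsq

end Corners

section NormIdentity

open scoped CStarAlgebra

variable {E B : Type*} [NonUnitalCStarAlgebra E] [NonUnitalCStarAlgebra B]

lemma exists_map_eq_zero_norm_sub_le (π : E →⋆ₙₐ[ℂ] B) {a : E} (ha : IsSelfAdjoint a) :
    ∃ y, π y = 0 ∧ ‖a - y‖ ≤ ‖π a‖ := by
  -- Truncate the spectrum of `a` to `[-r, r]`, an interval containing the spectrum of `π a`.
  set r := ‖π a‖
  have hr : 0 ≤ r := norm_nonneg _
  let trunc : ℝ → ℝ := fun t => max (-r) (min t r)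
  have htrunc0 : trunc 0 = 0 := by simp [trunc, hr]
  have hπa : IsSelfAdjoint (π a) := ha.map π
  have hπtrunc : π (cfcₙ trunc a) = π a := by
    rw [NonUnitalStarAlgHom.map_cfcₙ π trunc a (by fun_prop) htrunc0]
    conv_rhs => rw [← cfcₙ_id' ℝ (π a)]
    refine cfcₙ_congr fun t ht => ?_
    have hid : ‖t‖ ≤ ‖cfcₙ (fun t : ℝ => t) (π a)‖ :=
      norm_apply_le_norm_cfcₙ (fun t : ℝ => t) (π a) ht
    rw [cfcₙ_id' ℝ (π a)] at hid
    obtain ⟨hlow, hup⟩ : -r ≤ t ∧ t ≤ r := abs_le.mp hid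
    change max (-r) (min t r) = t
    rw [min_eq_left hup, max_eq_right hlow]
  refine ⟨a - cfcₙ trunc a, by rw [map_sub, hπtrunc, sub_self], ?_⟩
  rw [sub_sub_cancel]
  exact norm_cfcₙ_le fun t _ =>
    abs_le.mpr ⟨le_max_left _ _, max_le (by linarith) (min_le_right _ _)⟩

variable {α : Type*} {l : Filter α} {p : α → E}

lemma tendsto_max_norm_corner_norm_map (π : E →⋆ₙₐ[ℂ] B) (hp : ∀ n, IsStarProjection (p n))
    (happrox : ∀ y, π y = 0 → Tendsto (fun n => ‖p n * y - y‖) l (𝓝 0))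
    {x : E} (hqc : Tendsto (fun n => ‖p n * x - x * p n‖) l (𝓝 0)) :
    Tendsto (fun n => max ‖p n * x * p n‖ ‖π x‖) l (𝓝 ‖x‖) := by
  obtain ⟨y, hy, hxy⟩ := exists_map_eq_zero_norm_sub_le π (IsSelfAdjoint.star_mul_self x)
  rw [map_mul, map_star, CStarRing.norm_star_mul_self, ← sq] at hxy
  have hsqrt {δ : ℝ} (hδ : 0 ≤ δ) : √(‖star x * x - y‖ + δ) ≤ ‖π x‖ + √δ := by
    rw [Real.sqrt_le_left (by positivity)]
    nlinarith [Real.sq_sqrt hδ, mul_nonneg (norm_nonneg (π x)) (Real.sqrt_nonneg δ)]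
  have hlower (n : α) : ‖x‖ - (√‖p n * y - y‖ + ‖p n * x - x * p n‖) ≤
      max ‖p n * x * p n‖ ‖π x‖ := by
    have hmax : max ‖p n * x * p n‖ √(‖star x * x - y‖ + ‖p n * y - y‖) ≤
        max ‖p n * x * p n‖ ‖π x‖ + √‖p n * y - y‖ := by
      rw [max_add]
      exact max_le_max (le_add_of_nonneg_right (Real.sqrt_nonneg _)) (hsqrt (norm_nonneg _))
    linarith [norm_le_max_norm_corner_sqrt_add (hp n) x y]
  have herror : Tendsto (fun n => √‖p n * y - y‖ + ‖p n * x - x * p n‖) l (𝓝 0) := by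
    simpa using (happrox y hy).sqrt.add hqc
  refine tendsto_of_tendsto_of_tendsto_of_le_of_le (by simpa using herror.const_sub ‖x‖)
    tendsto_const_nhds hlower fun n => ?_
  exact max_le (norm_corner_le (hp n) x) (NonUnitalStarAlgHom.norm_apply_le π x)

end NormIdentity

section BlockDiagonal

open ContinuousLinearMap

lemma exists_orthogonal_isometries (𝕜 H₁ H₂ : Type*) [RCLike 𝕜]
    [NormedAddCommGroup H₁] [InnerProductSpace 𝕜 H₁] [FiniteDimensional 𝕜 H₁]
    [NormedAddCommGroup H₂] [InnerProductSpace 𝕜 H₂] [FiniteDimensional 𝕜 H₂] :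
    ∃ (m : ℕ) (V₁ : H₁ →ₗᵢ[𝕜] EuclideanSpace 𝕜 (Fin m))
      (V₂ : H₂ →ₗᵢ[𝕜] EuclideanSpace 𝕜 (Fin m)), ∀ x y, inner 𝕜 (V₁ x) (V₂ y) = 0 := by
  let W := (stdOrthonormalBasis 𝕜 (WithLp 2 (H₁ × H₂))).repr
  let e := (WithLp.linearEquiv 2 𝕜 (H₁ × H₂)).symm.toLinearMap
  refine ⟨_, W.toLinearIsometry.comp ⟨e ∘ₗ LinearMap.inl 𝕜 H₁ H₂, fun x => ?_⟩,
    W.toLinearIsometry.comp ⟨e ∘ₗ LinearMap.inr 𝕜 H₁ H₂, fun y => ?_⟩, fun x y => ?_⟩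
  all_goals simp [e]

variable {𝕜 H₁ H₂ K : Type*} [RCLike 𝕜]
  [NormedAddCommGroup H₁] [InnerProductSpace 𝕜 H₁] [CompleteSpace H₁]
  [NormedAddCommGroup H₂] [InnerProductSpace 𝕜 H₂]
  [NormedAddCommGroup K] [InnerProductSpace 𝕜 K] [CompleteSpace K]

lemma adjoint_linearIsometry_apply (V : H₁ →ₗᵢ[𝕜] K) (x : H₁) :
    adjoint V.toContinuousLinearMap (V x) = x :=
  congr($(V.adjoint_comp_self) x)

lemma adjoint_apply_eq_zero_of_orthogonal {V₁ : H₁ →ₗᵢ[𝕜] K} {V₂ : H₂ →ₗᵢ[𝕜] K}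
    (h : ∀ x y, inner 𝕜 (V₁ x) (V₂ y) = 0) (y : H₂) :
    adjoint V₁.toContinuousLinearMap (V₂ y) = 0 :=
  ext_inner_left 𝕜 fun x => by simp [adjoint_inner_right, h]

variable [CompleteSpace H₂]

/-- The block diagonal embedding `(S, T) ↦ V₁ S V₁* + V₂ T V₂*` of `B(H₁) × B(H₂)` into `B(K)`
given by isometries `V₁`, `V₂` with orthogonal ranges. It is not assumed that these ranges span
`K`, so the embedding need not preserve the unit. -/
noncomputable def blockDiagonal (V₁ : H₁ →ₗᵢ[𝕜] K) (V₂ : H₂ →ₗᵢ[𝕜] K)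
    (h : ∀ x y, inner 𝕜 (V₁ x) (V₂ y) = 0) :
    ((H₁ →L[𝕜] H₁) × (H₂ →L[𝕜] H₂)) →⋆ₙₐ[𝕜] (K →L[𝕜] K) where
  toFun T := V₁.toContinuousLinearMap ∘L T.1 ∘L adjoint V₁.toContinuousLinearMap +
    V₂.toContinuousLinearMap ∘L T.2 ∘L adjoint V₂.toContinuousLinearMap
  map_smul' c T := by ext1 x; simp
  map_zero' := by ext1 x; simp
  map_add' S T := by ext1 x; simp [add_add_add_comm]
  map_mul' S T := by
    have h' (y : H₂) (x : H₁) : inner 𝕜 (V₂ y) (V₁ x) = 0 := inner_eq_zero_symm.mp (h x y)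
    ext1 x
    simp [adjoint_linearIsometry_apply, adjoint_apply_eq_zero_of_orthogonal h,
      adjoint_apply_eq_zero_of_orthogonal h']
  map_star' T := by
    simp [star_eq_adjoint, adjoint_comp, comp_assoc]

lemma blockDiagonal_injective (V₁ : H₁ →ₗᵢ[𝕜] K) (V₂ : H₂ →ₗᵢ[𝕜] K)
    (h : ∀ x y, inner 𝕜 (V₁ x) (V₂ y) = 0) : Function.Injective (blockDiagonal V₁ V₂ h) := by
  have h' (y : H₂) (x : H₁) : inner 𝕜 (V₂ y) (V₁ x) = 0 := inner_eq_zero_symm.mp (h x y)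
  refine (injective_iff_map_eq_zero _).mpr fun T hT => Prod.ext ?_ ?_
  · ext1 x
    simpa [blockDiagonal, adjoint_linearIsometry_apply, adjoint_apply_eq_zero_of_orthogonal h',
      map_eq_zero_iff V₁ V₁.injective] using congr($hT (V₁ x))
  · ext1 y
    simpa [blockDiagonal, adjoint_linearIsometry_apply, adjoint_apply_eq_zero_of_orthogonal h,
      map_eq_zero_iff V₂ V₂.injective] using congr($hT (V₂ y))

end BlockDiagonal

section CompletePositivity

open ContinuousLinearMap
open scoped ComplexOrder

/-- A linear map `κ` taking every Gram matrix `(aᵢ* aⱼ)` to a Gram matrix `(ρ(aᵢ)* ρ(aⱼ))`. Such a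
map is completely positive; star homomorphisms and compressions to corners are of this form. -/
def IsGramMap {R A C : Type*} [Semiring R] [NonUnitalNonAssocSemiring A] [Star A] [Module R A]
    [NonUnitalNonAssocSemiring C] [Star C] [Module R C] (κ : A →ₗ[R] C) : Prop :=
  ∃ ρ : A → C, ∀ a b, κ (star a * b) = star (ρ a) * ρ b

namespace IsGramMap

variable {R A C D : Type*} [Semiring R]
  [NonUnitalNonAssocSemiring A] [Star A] [Module R A]
  [NonUnitalNonAssocSemiring C] [Star C] [Module R C]
  [NonUnitalNonAssocSemiring D] [Star D] [Module R D]

lemma of_map_mul_map_star {κ : A →ₗ[R] C} (hmul : ∀ a b, κ (a * b) = κ a * κ b)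
    (hstar : ∀ a, κ (star a) = star (κ a)) : IsGramMap κ :=
  ⟨κ, fun a b => by rw [hmul, hstar]⟩

lemma prod {κ : A →ₗ[R] C} {θ : A →ₗ[R] D} (hκ : IsGramMap κ) (hθ : IsGramMap θ) :
    IsGramMap (κ.prod θ) := by
  obtain ⟨ρ, hρ⟩ := hκ
  obtain ⟨σ, hσ⟩ := hθ
  exact ⟨fun a => (ρ a, σ a), fun a b => Prod.ext (hρ a b) (hσ a b)⟩

end IsGramMap

lemma exists_isGramMap_corner {R I E : Type*} [Semiring R]
    [NonUnitalRing I] [StarRing I] [Module R I]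
    [NonUnitalRing E] [StarRing E] [Module R E] [IsScalarTower R E E] [SMulCommClass R E E]
    {ι : I →⋆ₙₐ[R] E} (hι : Function.Injective ι) {p : E} (hp : IsStarProjection p)
    (hpι : ∀ x, x * p ∈ Set.range ι) :
    ∃ κ : E →ₗ[R] I, IsGramMap κ ∧ ∀ x, ι (κ x) = p * x * p := by
  choose ρ hρ using hpι
  let κ : E →ₗ[R] I :=
    { toFun x := ρ (p * x)
      map_add' x y := hι (by simp only [hρ, map_add, mul_add, add_mul])
      map_smul' c x := hι (by
        simp only [hρ, map_smul, RingHom.id_apply, mul_smul_comm, smul_mul_assoc]) }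
  have hκ (x : E) : ι (κ x) = p * x * p := hρ (p * x)
  refine ⟨κ, ⟨ρ, fun a b => hι ?_⟩, hκ⟩
  rw [hκ, map_mul, map_star, hρ, hρ, star_mul, hp.isSelfAdjoint.star_eq]
  simp only [mul_assoc]

variable {A C : Type*} [NonUnitalNormedRing A] [StarRing A] [Module ℂ A]
  [NonUnitalNormedRing C] [StarRing C] [Module ℂ C]

namespace IsCPIntoMat

variable {m n : ℕ}

lemma iff_sum_inner_nonneg {φ : A →ₗ[ℂ] MatOp n} :
    IsCPIntoMat φ ↔ ∀ (k : ℕ) (a : Fin k → A) (w : Fin k → EuclideanSpace ℂ (Fin n)),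
      0 ≤ ∑ i, ∑ j, inner ℂ (w i) (φ (star (a i) * a j) (w j)) := by
  constructor
  · intro hφ k a w
    rcases Nat.eq_zero_or_pos n with rfl | hn
    · simp [Subsingleton.elim (w _) 0]
    · let u : EuclideanSpace ℂ (Fin n) := EuclideanSpace.single ⟨0, hn⟩ 1
      have hu : ‖u‖ = 1 := by simp [u]
      have h := (hφ k a fun i => InnerProductSpace.rankOne ℂ (w i) u).inner_nonneg_right u
      simpa [star_eq_adjoint, sum_apply, inner_sum, hu, inner_smul_right] using h
  · intro h k a c
    have hinner (x : EuclideanSpace ℂ (Fin n)) :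
        0 ≤ inner ℂ ((∑ i, ∑ j, star (c i) * φ (star (a i) * a j) * c j) x) x := by
      have hx := h k a fun i => c i x
      rw [← inner_conj_symm, starRingEnd_apply, star_nonneg_iff]
      simpa [star_eq_adjoint, sum_apply, inner_sum, adjoint_inner_right] using hx
    refine (isPositive_iff_complex _).mpr fun x => ?_
    obtain ⟨hre, him⟩ := RCLike.nonneg_iff.mp (hinner x)
    exact ⟨RCLike.conj_eq_iff_re.mp (RCLike.conj_eq_iff_im.mpr him), hre⟩

lemma comp_isGramMap {φ : C →ₗ[ℂ] MatOp n} (hφ : IsCPIntoMat φ) {κ : A →ₗ[ℂ] C}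
    (hκ : IsGramMap κ) : IsCPIntoMat (φ ∘ₗ κ) := by
  obtain ⟨ρ, hρ⟩ := hκ
  intro k a c
  simpa only [LinearMap.comp_apply, hρ] using hφ k (fun i => ρ (a i)) c

lemma blockDiagonal_comp_prodMap {φ₁ : A →ₗ[ℂ] MatOp m} {φ₂ : C →ₗ[ℂ] MatOp n}
    (h₁ : IsCPIntoMat φ₁) (h₂ : IsCPIntoMat φ₂) {l : ℕ}
    (V₁ : EuclideanSpace ℂ (Fin m) →ₗᵢ[ℂ] EuclideanSpace ℂ (Fin l))
    (V₂ : EuclideanSpace ℂ (Fin n) →ₗᵢ[ℂ] EuclideanSpace ℂ (Fin l))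
    (h : ∀ x y, inner ℂ (V₁ x) (V₂ y) = 0) :
    IsCPIntoMat (LinearMapClass.linearMap (blockDiagonal V₁ V₂ h) ∘ₗ φ₁.prodMap φ₂) := by
  rw [iff_sum_inner_nonneg] at h₁ h₂ ⊢
  intro k a w
  have hsum := add_nonneg
    (h₁ k (fun i => (a i).1) fun i => adjoint V₁.toContinuousLinearMap (w i))
    (h₂ k (fun i => (a i).2) fun i => adjoint V₂.toContinuousLinearMap (w i))
  simpa [blockDiagonal, inner_add_right, Finset.sum_add_distrib, adjoint_inner_left] using hsum

end IsCPIntoMat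

end CompletePositivity

section Quasidiagonality

namespace VQD

lemma prod {A C : Type*} [NonUnitalNormedRing A] [StarRing A] [Module ℂ A]
    [NonUnitalNormedRing C] [StarRing C] [Module ℂ C] (hA : VQD A) (hC : VQD C) :
    VQD (A × C) := by
  classical
  intro F ε hε
  obtain ⟨m₁, -, φ₁, -, hcontr₁, hcp₁, hisom₁, hmul₁⟩ := hA (F.image Prod.fst) ε hε
  obtain ⟨m₂, -, φ₂, -, hcontr₂, hcp₂, hisom₂, hmul₂⟩ := hC (F.image Prod.snd) ε hε
  obtain ⟨m, V₁, V₂, hV⟩ := exists_orthogonal_isometries ℂ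
    (EuclideanSpace ℂ (Fin m₁)) (EuclideanSpace ℂ (Fin m₂))
  let D := blockDiagonal V₁ V₂ hV
  have hD (T : MatOp m₁ × MatOp m₂) : ‖D T‖ = ‖T‖ :=
    NonUnitalStarAlgHom.norm_map D (blockDiagonal_injective V₁ V₂ hV) T
  let φ : A × C →ₗ[ℂ] MatOp m := LinearMapClass.linearMap D ∘ₗ φ₁.prodMap φ₂
  have hφ (z : A × C) : φ z = D (φ₁ z.1, φ₂ z.2) := rfl
  refine ⟨m, ⊤, φ, fun _ => StarSubalgebra.mem_top, fun z => ?_,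
    hcp₁.blockDiagonal_comp_prodMap hcp₂ V₁ V₂ hV, fun z hz => ?_, fun z hz w hw => ?_⟩
  · rw [hφ, hD]
    exact max_le_max (hcontr₁ z.1) (hcontr₂ z.2)
  · rw [hφ, hD, Prod.norm_def, Prod.norm_def, ← max_sub_sub_right]
    exact max_le_max (hisom₁ _ (Finset.mem_image_of_mem _ hz))
      (hisom₂ _ (Finset.mem_image_of_mem _ hz))
  · rw [hφ, hφ, hφ, ← map_mul, ← map_sub, hD]
    exact max_le
      (hmul₁ _ (Finset.mem_image_of_mem _ hz) _ (Finset.mem_image_of_mem _ hw))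
      (hmul₂ _ (Finset.mem_image_of_mem _ hz) _ (Finset.mem_image_of_mem _ hw))

lemma of_tendsto {A C α : Type*} [NonUnitalNormedRing A] [StarRing A] [Module ℂ A]
    [NonUnitalNormedRing C] [StarRing C] [Module ℂ C] (hC : VQD C)
    {l : Filter α} [l.NeBot] (κ : α → A →ₗ[ℂ] C) (hgram : ∀ n, IsGramMap (κ n))
    (hcontr : ∀ n x, ‖κ n x‖ ≤ ‖x‖) (hnorm : ∀ x, Tendsto (fun n => ‖κ n x‖) l (𝓝 ‖x‖))
    (hmul : ∀ x y, Tendsto (fun n => ‖κ n (x * y) - κ n x * κ n y‖) l (𝓝 0)) : VQD A := by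
  classical
  intro F ε hε
  have hnormF : ∀ᶠ n in l, ∀ x ∈ F, ‖x‖ - ε / 2 ≤ ‖κ n x‖ :=
    (eventually_all_finset F).mpr fun x _ => (hnorm x).eventually_const_le (by linarith)
  have hmulF : ∀ᶠ n in l, ∀ x ∈ F, ∀ y ∈ F, ‖κ n (x * y) - κ n x * κ n y‖ ≤ ε / 2 :=
    (eventually_all_finset F).mpr fun x _ => (eventually_all_finset F).mpr fun y _ =>
      (hmul x y).eventually_le_const (half_pos hε)
  obtain ⟨n, hn, hn'⟩ := (hnormF.and hmulF).exists
  obtain ⟨m, S, φ, hS, hφ, hcp, hisom, happroxmul⟩ := hC (F.image (κ n)) (ε / 2) (half_pos hε)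
  refine ⟨m, S, φ ∘ₗ κ n, fun x => hS _, fun x => (hφ _).trans (hcontr n x),
    hcp.comp_isGramMap (hgram n), fun x hx => ?_, fun x hx y hy => ?_⟩
  · have h : ‖κ n x‖ - ε / 2 ≤ ‖φ (κ n x)‖ := hisom _ (Finset.mem_image_of_mem _ hx)
    change ‖x‖ - ε ≤ ‖φ (κ n x)‖
    linarith [hn x hx]
  · have h : ‖φ (κ n (x * y)) - φ (κ n x * κ n y)‖ ≤ ε / 2 := by
      rw [← map_sub]
      exact (hφ _).trans (hn' x hx y hy)
    calc ‖φ (κ n (x * y)) - φ (κ n x) * φ (κ n y)‖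
        ≤ ‖φ (κ n (x * y)) - φ (κ n x * κ n y)‖ +
          ‖φ (κ n x * κ n y) - φ (κ n x) * φ (κ n y)‖ := norm_sub_le_norm_sub_add_norm_sub ..
      _ ≤ ε / 2 + ε / 2 := add_le_add h
          (happroxmul _ (Finset.mem_image_of_mem _ hx) _ (Finset.mem_image_of_mem _ hy))
      _ = ε := add_halves ε

end VQD

end Quasidiagonality

theorem vqd_of_quasidiagonal_extension_general {I E B α : Type*}
    [NonUnitalCStarAlgebra I] [NonUnitalCStarAlgebra E] [NonUnitalCStarAlgebra B]
    {ι : I →⋆ₙₐ[ℂ] E} (hι : Function.Injective ι) {π : E →⋆ₙₐ[ℂ] B}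
    (hexact : Function.Exact ι π) {l : Filter α} [l.NeBot] {p : α → E}
    (hpI : ∀ n, p n ∈ Set.range ι) (hp : ∀ n, IsStarProjection (p n))
    (happrox : ∀ x ∈ Set.range ι, Tendsto (fun n => ‖p n * x - x‖) l (𝓝 0))
    (hqc : ∀ x : E, Tendsto (fun n => ‖p n * x - x * p n‖) l (𝓝 0))
    (hI : VQD I) (hB : VQD B) : VQD E := by
  have hπp (n : α) : π (p n) = 0 := (hexact _).mpr (hpI n)
  have hideal (n : α) (x : E) : x * p n ∈ Set.range ι :=
    (hexact _).mp (by rw [map_mul, hπp, mul_zero])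
  choose κ hgram hκ using fun n => exists_isGramMap_corner hι (hp n) (hideal n)
  have hιnorm (i : I) : ‖i‖ = ‖ι i‖ := (NonUnitalStarAlgHom.norm_map ι hι i).symm
  have hπgram : IsGramMap (π : E →ₗ[ℂ] B) := .of_map_mul_map_star (map_mul π) (map_star π)
  refine (hI.prod hB).of_tendsto (l := l) (fun n => (κ n).prod (π : E →ₗ[ℂ] B))
    (fun n => (hgram n).prod hπgram) (fun n x => ?_) (fun x => ?_) (fun x y => ?_)
  · change max ‖κ n x‖ ‖π x‖ ≤ ‖x‖
    rw [hιnorm, hκ]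
    exact max_le (norm_corner_le (hp n) x) (NonUnitalStarAlgHom.norm_apply_le π x)
  · change Tendsto (fun n => max ‖κ n x‖ ‖π x‖) l _
    simp only [hιnorm, hκ]
    exact tendsto_max_norm_corner_norm_map π hp
      (fun y hy => happrox y ((hexact y).mp hy)) (hqc x)
  · change Tendsto (fun n => max ‖κ n (x * y) - κ n x * κ n y‖ ‖π (x * y) - π x * π y‖) l _
    simp only [hιnorm, map_sub, map_mul, hκ, sub_self, norm_zero, norm_nonneg, max_eq_left]
    exact squeeze_zero (fun _ => norm_nonneg _) (fun n => norm_corner_mul_sub_le (hp n) x y)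
      (by simpa using (hqc y).const_mul ‖x‖)

/-- If `0 → I → E → B → 0` is a quasidiagonal extension (the ideal `I` has an approximate
unit of projections quasicentral in `E`) and both `I` and `B` are quasidiagonal, then `E`
is quasidiagonal. -/
theorem vqd_of_quasidiagonal_extension {I E B : Type*}
    [NonUnitalCStarAlgebra I] [NonUnitalCStarAlgebra E] [NonUnitalCStarAlgebra B]
    (ι : I →⋆ₙₐ[ℂ] E) (hι : Isometry ι)
    (π : E →⋆ₙₐ[ℂ] B) (hπ : Function.Surjective π)
    (hexact : ∀ x : E, π x = 0 ↔ x ∈ Set.range ι)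
    (p : ℕ → E) (hpI : ∀ n, p n ∈ Set.range ι)
    (hproj : ∀ n, p n * p n = p n ∧ star (p n) = p n)
    (hmono : ∀ n, p n * p (n + 1) = p n)
    (happrox : ∀ x ∈ Set.range ι, Tendsto (fun n => ‖p n * x - x‖) atTop (𝓝 0))
    (hqc : ∀ x : E, Tendsto (fun n => ‖p n * x - x * p n‖) atTop (𝓝 0))
    (hI : VQD I) (hB : VQD B) : VQD E :=
  vqd_of_quasidiagonal_extension_general hι.injective hexact hpI
    (fun n => ⟨(hproj n).1, (hproj n).2⟩) happrox hqc hI hB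
end

section
/- Let A be a simple unital C*-algebra such that for every finite set F ⊂ A and ε > 0 there exists a nonzero finite dimensional subalgebra B ⊂ A with unit P = 1_B satisfying ‖[a,P]‖ ≤ ε for all a ∈ F and PaP within ε of an element of B for all a ∈ F. Then A is quasidiagonal: for every finite set F and ε > 0 there is a unital completely positive map φ into a finite dimensional C*-algebra which is ε-multiplicative and ε-isometric on F. -/
open Filter Topology

/-!
A simple `C*`-algebra has a faithful representation `π`. If `S` is a finite dimensional subalgebra
with unit `P ≠ 0` and `π P ξ ≠ 0`, then `S` acts on the finite dimensional space `π(S) ξ`, so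
the compression `φ` of `π` to it satisfies `φ (a b) = φ a φ b` for `b ∈ S` and sends `P` to `1`.
Hence it is nearly multiplicative at every `y` that nearly commutes with `P` and has `P y P` close
to `S`.

Along a net of such compressions the norms `‖φ i a‖` accumulate only at `C*`-seminorms of `A`.
The only nonzero one, `p` say, is the given norm: it is definite by simplicity (closures of proper
ideals are proper, so the closed ideals decide), and if `p a < s < ‖a‖` with `a` normal, functional
calculus provides `k ≠ 0` and `‖w‖ ≤ 1 / s` with `k a w = k`, so that `p k ≤ p k * p a / s < p k`.
-/

open ContinuousLinearMap
open scoped ComplexOrder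

section ClosedIdeals

theorem isTwoSided_closure {R : Type*} [Ring R] [TopologicalSpace R] [IsTopologicalRing R]
    (I : Ideal R) [I.IsTwoSided] : I.closure.IsTwoSided :=
  ⟨fun b ha => map_mem_closure (f := (· * b)) (continuous_mul_const b) ha
    fun _ h => I.mul_mem_right b h⟩

theorem isSimpleRing_of_isClosed_eq_bot_or_eq_top {A : Type*} [NormedRing A] [CompleteSpace A]
    [Nontrivial A] (h : ∀ J : TwoSidedIdeal A, IsClosed (J : Set A) → J = ⊥ ∨ J = ⊤) :
    IsSimpleRing A := by
  refine .of_eq_bot_or_eq_top fun J => or_iff_not_imp_right.2 fun hJ => ?_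
  have hproper : J.asIdeal ≠ ⊤ := fun htop => hJ <| J.one_mem_iff.1 <|
    TwoSidedIdeal.mem_asIdeal.1 (htop ▸ Submodule.mem_top)
  have := isTwoSided_closure J.asIdeal
  have hclosed : IsClosed (J.asIdeal.closure.toTwoSided : Set A) := by
    rw [Ideal.coe_toTwoSided, Ideal.coe_closure]
    exact isClosed_closure
  have hne : J.asIdeal.closure.toTwoSided ≠ ⊤ := fun htop => Ideal.closure_ne_top _ hproper <|
    (Ideal.eq_top_iff_one _).2 (Ideal.mem_toTwoSided.1 (htop ▸ trivial))
  have hbot := (h _ hclosed).resolve_right hne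
  exact le_bot_iff.1 fun a ha => hbot ▸ Ideal.mem_toTwoSided.2 (subset_closure ha)

end ClosedIdeals

section States

variable {A : Type*} [CStarAlgebra A] [PartialOrder A] [StarOrderedRing A]

theorem re_apply_nonneg_of_norm_le_apply_one {f : StrongDual ℂ A} (hf : ‖f‖ ≤ (f 1).re)
    {a : A} (ha : 0 ≤ a) : 0 ≤ (f a).re := by
  have hnorm : ‖algebraMap ℝ A ‖a‖ - a‖ ≤ ‖a‖ :=
    (CStarAlgebra.norm_le_iff_le_algebraMap _ (norm_nonneg a)
      (sub_nonneg.2 (IsSelfAdjoint.of_nonneg ha).le_algebraMap_norm_self)).2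
        (sub_le_self _ ha)
  have hre : (f (algebraMap ℝ A ‖a‖ - a)).re = ‖a‖ * (f 1).re - (f a).re := by
    simp [Algebra.algebraMap_eq_smul_one, ← Complex.coe_smul]
  have hle : (f (algebraMap ℝ A ‖a‖ - a)).re ≤ ‖f‖ * ‖a‖ :=
    (Complex.re_le_norm _).trans ((f.le_opNorm _).trans (by gcongr))
  nlinarith [norm_nonneg a]

variable (A) in
theorem exists_state [Nontrivial A] : ∃ f : A →ₚ[ℂ] ℂ, f 1 = 1 := by
  obtain ⟨f, hf, hf1⟩ := exists_dual_vector ℂ (1 : A) (norm_ne_zero_iff.2 one_ne_zero)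
  rw [norm_one, RCLike.ofReal_one] at hf1
  let g : A →ₗ[ℂ] ℂ :=
    { toFun := fun a => (f a + star (f (star a))) / 2
      map_add' := fun a b => by simp only [star_add, map_add]; ring
      map_smul' := fun c a => by
        simp only [star_smul, map_smul, smul_eq_mul, star_mul', star_star, RingHom.id_apply]
        ring }
  refine ⟨.mk₀ g fun a ha => ?_, ?_⟩
  · have hg : g a = ((f a).re : ℂ) := by
      simp [g, (IsSelfAdjoint.of_nonneg ha).star_eq, Complex.add_conj]
    rw [hg]
    exact_mod_cast re_apply_nonneg_of_norm_le_apply_one (by simp [hf, hf1]) ha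
  · change g 1 = 1
    simp [g, hf1]

theorem nontrivial_GNS {f : A →ₚ[ℂ] ℂ} (hf : f 1 ≠ 0) : Nontrivial f.GNS := by
  refine nontrivial_of_ne (f.toPreGNS 1 : f.GNS) 0 fun h => hf ?_
  have hnorm : ‖f.toPreGNS 1‖ = 0 := by
    rw [← UniformSpace.Completion.norm_coe, h, norm_zero]
  simpa [hnorm] using (f.preGNS_norm_sq (f.toPreGNS 1)).symm

end States

universe u

theorem exists_injective_starAlgHom (A : Type u) [CStarAlgebra A] [IsSimpleRing A] :
    ∃ (H : Type u) (_ : NormedAddCommGroup H) (_ : InnerProductSpace ℂ H) (_ : CompleteSpace H)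
      (π : A →⋆ₐ[ℂ] (H →L[ℂ] H)), Function.Injective π := by
  let _ : PartialOrder A := CStarAlgebra.spectralOrder A
  have _ : StarOrderedRing A := CStarAlgebra.spectralOrderedRing A
  obtain ⟨f, hf⟩ := exists_state A
  have _ : Nontrivial f.GNS := nontrivial_GNS (hf ▸ one_ne_zero)
  exact ⟨f.GNS, inferInstance, inferInstance, inferInstance, f.gnsStarAlgHom,
    (f.gnsStarAlgHom : A →+* (f.GNS →L[ℂ] f.GNS)).injective⟩

section AlgebraNorms

theorem eq_zero_of_ringSeminorm_eq_zero {R : Type*} [Ring R] [IsSimpleRing R]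
    {p : RingSeminorm R} (hp : p ≠ 0) {a : R} (ha : p a = 0) : a = 0 := by
  let J : TwoSidedIdeal R := .mk' {a | p a = 0} (map_zero p)
    (fun {a b} (ha : p a = 0) (hb : p b = 0) =>
      ((map_add_le_add p a b).trans_eq (by simp [ha, hb])).antisymm (apply_nonneg p _))
    (fun {a} (ha : p a = 0) => (map_neg_eq_map p a).trans ha)
    (fun {a b} (hb : p b = 0) =>
      ((map_mul_le_mul p a b).trans_eq (by simp [hb])).antisymm (apply_nonneg p _))
    (fun {a b} (ha : p a = 0) =>
      ((map_mul_le_mul p a b).trans_eq (by simp [ha])).antisymm (apply_nonneg p _))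
  have mem_J {b : R} : b ∈ J ↔ p b = 0 := TwoSidedIdeal.mem_mk' ..
  obtain ⟨b, hb⟩ := RingSeminorm.ne_zero_iff.1 hp
  have hbot : J = ⊥ := (eq_bot_or_eq_top J).resolve_right fun htop =>
    hb (mem_J.1 (htop ▸ trivial))
  exact (TwoSidedIdeal.mem_bot _).1 (hbot ▸ mem_J.2 ha)

variable {A : Type*} [CStarAlgebra A] {p : RingSeminorm A}

theorem exists_mul_mul_eq_self_of_lt_norm {a : A} [IsStarNormal a] {s : ℝ} (hs : 0 < s)
    (hsa : s < ‖a‖) : ∃ k w : A, k ≠ 0 ∧ ‖w‖ ≤ s⁻¹ ∧ k * a * w = k := by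
  -- `k = (|a| - s)₊` and `w = a⋆ / max(|a|, s)²`, so that `a w = 1` wherever `k` does not vanish.
  let m (z : ℂ) : ℝ := max ‖z‖ s
  let f (z : ℂ) : ℂ := ↑(m z - s)
  let g (z : ℂ) : ℂ := star z / ↑(m z ^ 2)
  have hm (z : ℂ) : 0 < m z := hs.trans_le (le_max_right _ _)
  have hmcont : Continuous m := by fun_prop
  have hf : Continuous f := by fun_prop
  have hg : Continuous g :=
    continuous_star.div (by fun_prop) fun z => by exact_mod_cast (pow_pos (hm z) 2).ne'
  refine ⟨cfc f a, cfc g a, fun hk => hsa.not_ge ?_, norm_cfc_le (by positivity) fun z _ => ?_, ?_⟩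
  · nth_rw 1 [← cfc_id ℂ a]
    refine norm_cfc_le hs.le fun z hz => ?_
    have hfz : ‖f z‖ ≤ 0 := by
      simpa only [hk, norm_zero] using norm_apply_le_norm_cfc f a hz
    have : m z = s := by simpa [f, sub_eq_zero, ← Complex.ofReal_sub] using hfz
    exact this ▸ le_max_left _ _
  · have : ‖g z‖ = ‖z‖ / m z ^ 2 := by
      simp [g, abs_of_pos (hm z)]
    calc ‖g z‖ = ‖z‖ / m z ^ 2 := this
      _ ≤ m z / m z ^ 2 := by gcongr; exact le_max_left _ _
      _ = (m z)⁻¹ := by have := hm z; field_simp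
      _ ≤ s⁻¹ := by gcongr; exact le_max_right _ _
  · have hfg (z : ℂ) : f z * z * g z = f z := by
      rcases le_total ‖z‖ s with hz | hz
      · simp [f, m, hz]
      · have hz0 : (‖z‖ : ℂ) ≠ 0 := by exact_mod_cast (hs.trans_le hz).ne'
        simp only [f, g, m, max_eq_left hz, mul_assoc, mul_div_assoc', Complex.star_def,
          Complex.mul_conj']
        push_cast
        field_simp
    calc cfc f a * a * cfc g a = cfc f a * cfc id a * cfc g a := by rw [cfc_id ℂ a]
      _ = cfc f a := by
        rw [← cfc_mul .., ← cfc_mul ..]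
        exact congrArg (cfc · a) (funext hfg)

theorem norm_le_ringSeminorm_of_isStarNormal (hle : ∀ a, p a ≤ ‖a‖) (hp : ∀ a, p a = 0 → a = 0)
    (a : A) [IsStarNormal a] : ‖a‖ ≤ p a := by
  by_contra! hlt
  obtain ⟨s, hps, hsa⟩ := exists_between hlt
  have hs : 0 < s := (apply_nonneg p a).trans_lt hps
  obtain ⟨k, w, hk, hw, hkaw⟩ := exists_mul_mul_eq_self_of_lt_norm hs hsa
  have hpk : 0 < p k := (apply_nonneg p k).lt_of_ne' (mt (hp k) hk)
  have : p k < p k := calc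
    p k = p (k * a * w) := by rw [hkaw]
    _ ≤ p k * p a * p w :=
      (map_mul_le_mul p _ _).trans (by gcongr; exact map_mul_le_mul p _ _)
    _ ≤ p k * p a * s⁻¹ := by gcongr; exact (hle w).trans hw
    _ < p k * s * s⁻¹ := by gcongr
    _ = p k := mul_inv_cancel_right₀ hs.ne' _
  exact this.false

theorem ringSeminorm_eq_norm (hle : ∀ a, p a ≤ ‖a‖) (hp : ∀ a, p a = 0 → a = 0)
    (hstar : ∀ a, p (star a * a) = p a ^ 2) (a : A) : p a = ‖a‖ := by
  refine (hle a).antisymm (le_of_sq_le_sq ?_ (apply_nonneg p a))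
  calc ‖a‖ ^ 2 = ‖star a * a‖ := by rw [CStarRing.norm_star_mul_self, sq]
    _ ≤ p (star a * a) :=
      have := (IsSelfAdjoint.star_mul_self a).isStarNormal
      norm_le_ringSeminorm_of_isStarNormal hle hp _
    _ = p a ^ 2 := hstar a

end AlgebraNorms

section Asymptotics

variable {ι A : Type*} {B : ι → Type*}

theorem exists_ringSeminorm_tendsto_norm [NonUnitalSeminormedRing A]
    [∀ i, NonUnitalSeminormedRing (B i)] (U : Ultrafilter ι) (φ : ∀ i, A →+ B i)
    (hle : ∀ i a, ‖φ i a‖ ≤ ‖a‖)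
    (hmul : ∀ a b, Tendsto (fun i => ‖φ i (a * b) - φ i a * φ i b‖) U (𝓝 0)) :
    ∃ p : RingSeminorm A, ∀ a, Tendsto (fun i => ‖φ i a‖) U (𝓝 (p a)) := by
  have hlim (a : A) : ∃ r, Tendsto (fun i => ‖φ i a‖) U (𝓝 r) := by
    obtain ⟨r, -, hr⟩ := (isCompact_Icc (a := (0 : ℝ)) (b := ‖a‖)).ultrafilter_le_nhds'
      (U.map fun i => ‖φ i a‖) (Ultrafilter.mem_map.2 (univ_mem' fun i => ⟨norm_nonneg _, hle i a⟩))
    exact ⟨r, hr⟩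
  choose q hq using hlim
  refine ⟨{ toFun := q, map_zero' := ?_, add_le' := fun a b => ?_, neg' := fun a => ?_,
            mul_le' := fun a b => ?_ }, hq⟩
  · exact tendsto_nhds_unique (hq 0) (by simp)
  · refine le_of_tendsto_of_tendsto' (hq (a + b)) ((hq a).add (hq b)) fun i => ?_
    exact map_add (φ i) a b ▸ norm_add_le _ _
  · exact tendsto_nhds_unique (hq (-a)) (by simpa using hq a)
  · refine le_of_tendsto_of_tendsto' (hq (a * b))
      (by simpa using (hmul a b).add ((hq a).mul (hq b))) fun i => ?_
    calc ‖φ i (a * b)‖ ≤ ‖φ i (a * b) - φ i a * φ i b‖ + ‖φ i a * φ i b‖ := by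
          simpa using norm_add_le (φ i (a * b) - φ i a * φ i b) (φ i a * φ i b)
      _ ≤ ‖φ i (a * b) - φ i a * φ i b‖ + ‖φ i a‖ * ‖φ i b‖ := by gcongr; exact norm_mul_le _ _

theorem tendsto_norm_of_tendsto_map_mul [CStarAlgebra A] [IsSimpleRing A]
    [∀ i, NormedRing (B i)] [∀ i, StarRing (B i)] [∀ i, CStarRing (B i)] [∀ i, Nontrivial (B i)]
    {l : Filter ι} {φ : ∀ i, A →+ B i} (hle : ∀ i a, ‖φ i a‖ ≤ ‖a‖) (hone : ∀ i, φ i 1 = 1)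
    (hstar : ∀ i a, φ i (star a) = star (φ i a))
    (hmul : ∀ a b, Tendsto (fun i => ‖φ i (a * b) - φ i a * φ i b‖) l (𝓝 0)) (a : A) :
    Tendsto (fun i => ‖φ i a‖) l (𝓝 ‖a‖) := by
  refine tendsto_iff_ultrafilter _ _ _ |>.2 fun U hU => ?_
  have hmulU (a b : A) := (hmul a b).mono_left hU
  obtain ⟨p, hp⟩ := exists_ringSeminorm_tendsto_norm U φ hle hmulU
  have hp_le (a : A) : p a ≤ ‖a‖ := le_of_tendsto' (hp a) fun i => hle i a
  have hp_one : p 1 = 1 := tendsto_nhds_unique (hp 1) (by simp [hone])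
  have hp_ne : p ≠ 0 := RingSeminorm.ne_zero_iff.2 ⟨1, hp_one ▸ one_ne_zero⟩
  have hp_star (a : A) : p (star a * a) = p a ^ 2 := by
    have hdiff : Tendsto (fun i => ‖φ i (star a * a)‖ - ‖φ i a‖ ^ 2) U (𝓝 0) := by
      refine squeeze_zero_norm (fun i => ?_) (hmulU (star a) a)
      rw [sq, ← CStarRing.norm_star_mul_self, hstar]
      exact abs_norm_sub_norm_le _ _
    exact sub_eq_zero.1 (tendsto_nhds_unique ((hp (star a * a)).sub ((hp a).pow 2)) hdiff)
  rw [← ringSeminorm_eq_norm hp_le (fun _ => eq_zero_of_ringSeminorm_eq_zero hp_ne) hp_star a]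
  exact hp a

end Asymptotics

theorem norm_map_mul_sub_map_mul_map_le {A B : Type*} [NonUnitalSeminormedRing A]
    [NonUnitalSeminormedRing B] {φ : A →+ B} (hle : ∀ a, ‖φ a‖ ≤ ‖a‖) {e b : A}
    (he : ∀ a, φ (a * e) = φ a) (hb : ∀ a, φ (a * b) = φ a * φ b) (x y : A) :
    ‖φ (x * y) - φ x * φ y‖ ≤ 2 * ‖x‖ * (‖y * e - e * y‖ + ‖e * y * e - b‖) := by
  -- `φ` cannot distinguish `d` from `y - b`, and it is exactly multiplicative at `b`.
  set d := (y * e - e * y) + (e * y * e - b) with hd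
  have hy : φ d = φ y - φ b := by
    simp only [hd, map_add, map_sub, he]
    abel
  have hxy : φ (x * d) = φ (x * y) - φ x * φ b := by
    simp only [hd, mul_add, mul_sub, map_add, map_sub, ← mul_assoc, he, hb]
    abel
  have hdefect : φ (x * y) - φ x * φ y = φ (x * d) - φ x * φ d := by
    rw [hxy, hy, mul_sub]
    abel
  calc ‖φ (x * y) - φ x * φ y‖ ≤ ‖φ (x * d)‖ + ‖φ x * φ d‖ := hdefect ▸ norm_sub_le _ _
    _ ≤ ‖x‖ * ‖d‖ + ‖x‖ * ‖d‖ := by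
      gcongr
      · exact (hle _).trans (norm_mul_le _ _)
      · exact (norm_mul_le _ _).trans (by gcongr <;> exact hle _)
    _ = 2 * ‖x‖ * ‖d‖ := by ring
    _ ≤ 2 * ‖x‖ * (‖y * e - e * y‖ + ‖e * y * e - b‖) := by gcongr; exact norm_add_le _ _

section Compression

variable {A H K : Type*} [NormedAddCommGroup H] [InnerProductSpace ℂ H] [CompleteSpace H]
  [NormedAddCommGroup K] [InnerProductSpace ℂ K] [CompleteSpace K]

/-- The compression `a ↦ V⋆ π(a) V` of a representation `π` to the subspace that is the range of
the isometry `V`, transported to the domain of `V`; with domain `ℂⁿ` its values are matrices. -/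
noncomputable def compression [Semiring A] [StarRing A] [Algebra ℂ A] (π : A →⋆ₐ[ℂ] (H →L[ℂ] H))
    (V : K →ₗᵢ[ℂ] H) : A →ₗ[ℂ] (K →L[ℂ] K) where
  toFun a := adjoint V.toContinuousLinearMap ∘L π a ∘L V.toContinuousLinearMap
  map_add' a b := by simp only [map_add, add_comp, comp_add]
  map_smul' c a := by simp only [map_smul, smul_comp, comp_smul, RingHom.id_apply]

section Algebra

variable [Semiring A] [StarRing A] [Algebra ℂ A] (π : A →⋆ₐ[ℂ] (H →L[ℂ] H)) (V : K →ₗᵢ[ℂ] H)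

theorem compression_apply (a : A) : compression π V a =
    adjoint V.toContinuousLinearMap ∘L π a ∘L V.toContinuousLinearMap := rfl

theorem compression_one : compression π V 1 = 1 := by
  rw [compression_apply, map_one, one_def, id_comp]
  exact V.adjoint_comp_self

theorem compression_star (a : A) : compression π V (star a) = star (compression π V a) := by
  simp only [compression_apply, map_star, star_eq_adjoint, adjoint_comp, adjoint_adjoint,
    comp_assoc]

variable {π V}

theorem compression_mul_of_map_range {b : A} (hb : ∀ v, π b (V v) ∈ LinearMap.range V.toLinearMap)
    (a : A) : compression π V (a * b) = compression π V a * compression π V b := by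
  ext1 v
  obtain ⟨w, hw : V w = π b (V v)⟩ := hb v
  have hVw : adjoint V.toContinuousLinearMap (V w) = w :=
    DFunLike.congr_fun V.adjoint_comp_self w
  simp [compression_apply, ← hw, hVw]

theorem compression_eq_one {e : A} (he : ∀ v, π e (V v) = V v) : compression π V e = 1 := by
  rw [← compression_one π V]
  ext1 v
  simp [compression_apply, he]

end Algebra

variable [CStarAlgebra A] (π : A →⋆ₐ[ℂ] (H →L[ℂ] H)) (V : K →ₗᵢ[ℂ] H)

theorem norm_compression_le (a : A) : ‖compression π V a‖ ≤ ‖a‖ := by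
  have hV : ‖V.toContinuousLinearMap‖ ≤ 1 := V.norm_toContinuousLinearMap_le
  have hV' : ‖adjoint V.toContinuousLinearMap‖ ≤ 1 := by
    rwa [LinearIsometryEquiv.norm_map]
  calc ‖compression π V a‖
      ≤ ‖adjoint V.toContinuousLinearMap‖ * (‖π a‖ * ‖V.toContinuousLinearMap‖) :=
        (opNorm_comp_le _ _).trans (by gcongr; exact opNorm_comp_le _ _)
    _ ≤ 1 * (‖a‖ * 1) := by gcongr; exact NonUnitalStarAlgHom.norm_apply_le π a
    _ = ‖a‖ := by ring

theorem isCPIntoMat_compression {n : ℕ} (V : EuclideanSpace ℂ (Fin n) →ₗᵢ[ℂ] H) :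
    IsCPIntoMat (compression π V) := by
  intro k a c
  let T := ∑ i, π (a i) ∘L V.toContinuousLinearMap ∘L c i
  have hsum : ∑ i, ∑ j, star (c i) * compression π V (star (a i) * a j) * c j =
      adjoint T ∘L T := by
    rw [Finset.sum_comm]
    simp only [T, map_sum, finsetSum_comp, comp_finsetSum, adjoint_comp, compression_apply, map_mul,
      map_star, star_eq_adjoint, mul_def, comp_assoc]
  rw [hsum]
  exact isPositive_adjoint_comp_self T

end Compression

section PopaApproximation

theorem exists_linearIsometry_range_eq {H : Type*} [NormedAddCommGroup H] [InnerProductSpace ℂ H]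
    (K : Submodule ℂ H) [FiniteDimensional ℂ K] :
    ∃ (n : ℕ) (V : EuclideanSpace ℂ (Fin n) →ₗᵢ[ℂ] H), LinearMap.range V.toLinearMap = K :=
  ⟨_, K.subtypeₗᵢ.comp (stdOrthonormalBasis ℂ K).repr.symm.toLinearIsometry, by
    ext v
    refine ⟨?_, fun hv => ⟨(stdOrthonormalBasis ℂ K).repr ⟨v, hv⟩, by simp⟩⟩
    rintro ⟨w, rfl⟩
    simp⟩

theorem exists_compression_map_mul {A H : Type*} [Ring A] [StarRing A] [Algebra ℂ A]
    [NormedAddCommGroup H] [InnerProductSpace ℂ H] [CompleteSpace H] (π : A →⋆ₐ[ℂ] (H →L[ℂ] H))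
    (S : NonUnitalSubalgebra ℂ A) [FiniteDimensional ℂ S] {P : A} (hPS : P ∈ S)
    (hP : ∀ b ∈ S, P * b = b) (hπP : π P ≠ 0) :
    ∃ (n : ℕ) (V : EuclideanSpace ℂ (Fin n) →ₗᵢ[ℂ] H), Nontrivial (MatOp n) ∧
      compression π V P = 1 ∧
      ∀ a, ∀ b ∈ S, compression π V (a * b) = compression π V a * compression π V b := by
  obtain ⟨ξ, hξ⟩ : ∃ ξ, π P ξ ≠ 0 := by
    by_contra! h
    exact hπP (ext h)
  let T : S →ₗ[ℂ] H :=
    (apply ℂ H ξ).toLinearMap ∘ₗ π.toLinearMap ∘ₗ S.toSubmodule.subtype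
  obtain ⟨n, V, hV⟩ := exists_linearIsometry_range_eq (LinearMap.range T)
  have exists_eq (v) : ∃ b ∈ S, π b ξ = V v := by
    obtain ⟨b, hb⟩ : V v ∈ LinearMap.range T := hV ▸ ⟨v, rfl⟩
    exact ⟨b, b.2, hb⟩
  have mem_range {b : A} (hb : b ∈ S) : π b ξ ∈ LinearMap.range V.toLinearMap :=
    hV ▸ ⟨⟨b, hb⟩, rfl⟩
  refine ⟨n, V, ?_, compression_eq_one fun v => ?_, fun a b hb =>
    compression_mul_of_map_range (fun v => ?_) a⟩
  · obtain ⟨v, hv : V v = π P ξ⟩ := mem_range hPS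
    have : Nontrivial (EuclideanSpace ℂ (Fin n)) :=
      nontrivial_of_ne v 0 fun hv0 => hξ (by rw [← hv, hv0, map_zero])
    infer_instance
  · obtain ⟨b, hb, hbv⟩ := exists_eq v
    rw [← hbv, ← mul_apply_eq_comp, ← map_mul, hP b hb]
  · obtain ⟨c, hc, hcv⟩ := exists_eq v
    rw [← hcv, ← mul_apply_eq_comp, ← map_mul]
    exact mem_range (mul_mem hb hc)

/-- The hypothesis of Popa's theorem, in a form that does not refer to the involution: for every
finite set `F` and `ε > 0` there is a nonzero finite dimensional subalgebra `S` with left unit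
`P ∈ S` such that `‖[a, P]‖ ≤ ε` and `dist(P a P, S) ≤ ε` for all `a ∈ F`. -/
def HasPopaApproximation (A : Type*) [NormedRing A] [Algebra ℂ A] : Prop :=
  ∀ (F : Finset A) (ε : ℝ), 0 < ε →
    ∃ (S : NonUnitalSubalgebra ℂ A) (P : A), FiniteDimensional ℂ S ∧ P ∈ S ∧ P ≠ 0 ∧
      (∀ b ∈ S, P * b = b) ∧ (∀ a ∈ F, ‖a * P - P * a‖ ≤ ε) ∧
      ∀ a ∈ F, ∃ b ∈ S, ‖P * a * P - b‖ ≤ ε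

theorem HasPopaApproximation.nontrivial {A : Type*} [NormedRing A] [Algebra ℂ A]
    (hA : HasPopaApproximation A) : Nontrivial A :=
  have ⟨_, P, _, _, hP, _⟩ := hA ∅ 1 one_pos
  nontrivial_of_ne P 0 hP

variable {A H : Type*} [CStarAlgebra A] [NormedAddCommGroup H] [InnerProductSpace ℂ H]
  [CompleteSpace H] {π : A →⋆ₐ[ℂ] (H →L[ℂ] H)}

theorem HasPopaApproximation.exists_compression_norm_sub_le (hA : HasPopaApproximation A)
    (hπ : Function.Injective π) (F : Finset A) {ε : ℝ} (hε : 0 < ε) :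
    ∃ (n : ℕ) (V : EuclideanSpace ℂ (Fin n) →ₗᵢ[ℂ] H), Nontrivial (MatOp n) ∧
      ∀ x, ∀ y ∈ F, ‖compression π V (x * y) - compression π V x * compression π V y‖ ≤
        2 * ‖x‖ * (ε + ε) := by
  obtain ⟨S, P, _, hPS, hP0, hP, hcomm, hdist⟩ := hA F ε hε
  obtain ⟨n, V, hn, hVP, hmul⟩ :=
    exists_compression_map_mul π S hPS hP ((map_ne_zero_iff π hπ).2 hP0)
  refine ⟨n, V, hn, fun x y hy => ?_⟩
  obtain ⟨b, hb, hyb⟩ := hdist y hy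
  calc ‖compression π V (x * y) - compression π V x * compression π V y‖
      ≤ 2 * ‖x‖ * (‖y * P - P * y‖ + ‖P * y * P - b‖) :=
        norm_map_mul_sub_map_mul_map_le (φ := (compression π V).toAddMonoidHom)
          (norm_compression_le π V) (fun a => (hmul a P hPS).trans (hVP ▸ mul_one _))
          (hmul · b hb) x y
    _ ≤ 2 * ‖x‖ * (ε + ε) := by gcongr; exact hcomm y hy

theorem HasPopaApproximation.exists_compression_tendsto (hA : HasPopaApproximation A)
    (hπ : Function.Injective π) :
    ∃ (n : Finset A × ℕ → ℕ) (V : ∀ i, EuclideanSpace ℂ (Fin (n i)) →ₗᵢ[ℂ] H),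
      (∀ i, Nontrivial (MatOp (n i))) ∧ ∀ x y, Tendsto (fun i =>
        ‖compression π (V i) (x * y) - compression π (V i) x * compression π (V i) y‖)
        atTop (𝓝 0) := by
  choose n V hn hV using fun i : Finset A × ℕ =>
    hA.exists_compression_norm_sub_le hπ i.1 (Nat.one_div_pos_of_nat (α := ℝ) (n := i.2))
  refine ⟨n, V, hn, fun x y => ?_⟩
  have tendsto_snd_atTop : Tendsto (Prod.snd : Finset A × ℕ → ℕ) atTop atTop := by
    rw [← prod_atTop_atTop_eq]
    exact tendsto_snd
  have hsnd : Tendsto (fun i : Finset A × ℕ => 1 / ((i.2 : ℝ) + 1)) atTop (𝓝 0) :=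
    tendsto_one_div_add_atTop_nhds_zero_nat.comp tendsto_snd_atTop
  have hbound := (hsnd.add hsnd).const_mul (2 * ‖x‖)
  rw [add_zero, mul_zero] at hbound
  refine squeeze_zero' (.of_forall fun _ => norm_nonneg _) ?_ hbound
  filter_upwards [eventually_ge_atTop (({y}, 0) : Finset A × ℕ)] with i hi
  exact hV i x y (Finset.singleton_subset_iff.1 hi.1)

end PopaApproximation

theorem popa_local_implies_quasidiagonal_general {A : Type*} [CStarAlgebra A]
    (hsimple : ∀ J : TwoSidedIdeal A, IsClosed (J : Set A) → J = ⊥ ∨ J = ⊤)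
    (hA : HasPopaApproximation A) (F : Finset A) (ε : ℝ) (hε : 0 < ε) :
    ∃ (n : ℕ) (φ : A →ₗ[ℂ] MatOp n),
      φ 1 = 1 ∧ IsCPIntoMat φ ∧ (∀ x ∈ F, ‖x‖ - ε ≤ ‖φ x‖) ∧
      ∀ x ∈ F, ∀ y ∈ F, ‖φ (x * y) - φ x * φ y‖ ≤ ε := by
  classical
  have := hA.nontrivial
  have := isSimpleRing_of_isClosed_eq_bot_or_eq_top hsimple
  obtain ⟨H, _, _, _, π, hπ⟩ := exists_injective_starAlgHom A
  obtain ⟨n, V, _, hmul⟩ := hA.exists_compression_tendsto hπ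
  have hnorm := tendsto_norm_of_tendsto_map_mul
    (φ := fun i => (compression π (V i)).toAddMonoidHom) (fun i => norm_compression_le π (V i))
    (fun i => compression_one π (V i)) (fun i => compression_star π (V i)) hmul
  have hisometric : ∀ᶠ i in atTop, ∀ x ∈ F, ‖x‖ - ε ≤ ‖compression π (V i) x‖ :=
    F.eventually_all.2 fun x _ => (hnorm x).eventually_const_le (sub_lt_self _ hε)
  have hmultiplicative : ∀ᶠ i in atTop, ∀ x ∈ F, ∀ y ∈ F,
      ‖compression π (V i) (x * y) - compression π (V i) x * compression π (V i) y‖ ≤ ε :=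
    F.eventually_all.2 fun x _ => F.eventually_all.2 fun y _ => (hmul x y).eventually_le_const hε
  obtain ⟨i, hi⟩ := (hisometric.and hmultiplicative).exists
  exact ⟨n i, compression π (V i), compression_one π (V i), isCPIntoMat_compression π (V i), hi⟩

/-- (Easy direction of Popa's theorem.)  Let `A` be a simple unital `C*`-algebra such that
for every finite `F ⊆ A` and `ε > 0` there is a nonzero finite dimensional subalgebra
`S ⊆ A` with unit `P` satisfying `‖[a,P]‖ ≤ ε` and `dist(P a P, S) ≤ ε` for `a ∈ F`.
Then `A` is quasidiagonal: for every finite `F` and `ε > 0` there is a unital completely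
positive map into a matrix algebra which is `ε`-multiplicative and `ε`-isometric on `F`. -/
theorem popa_local_implies_quasidiagonal {A : Type*} [CStarAlgebra A]
    (hsimple : ∀ J : TwoSidedIdeal A, IsClosed (J : Set A) → J = ⊥ ∨ J = ⊤)
    (hloc : ∀ (F : Finset A) (ε : ℝ), 0 < ε →
      ∃ (S : NonUnitalStarSubalgebra ℂ A) (P : A),
        FiniteDimensional ℂ S ∧ S ≠ ⊥ ∧
        P ∈ S ∧ P ≠ 0 ∧ P * P = P ∧ star P = P ∧
        (∀ b ∈ S, P * b = b ∧ b * P = b) ∧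
        (∀ a ∈ F, ‖a * P - P * a‖ ≤ ε) ∧
        ∀ a ∈ F, ∃ b ∈ S, ‖P * a * P - b‖ ≤ ε) :
    ∀ (F : Finset A) (ε : ℝ), 0 < ε →
      ∃ (n : ℕ) (φ : A →ₗ[ℂ] MatOp n),
        φ 1 = 1 ∧ IsCPIntoMat φ ∧
        (∀ x ∈ F, ‖x‖ - ε ≤ ‖φ x‖) ∧
        ∀ x ∈ F, ∀ y ∈ F, ‖φ (x * y) - φ x * φ y‖ ≤ ε :=
  popa_local_implies_quasidiagonal_general hsimple fun F ε hε =>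
    let ⟨S, P, hfin, _, hPS, hP0, _, _, hunit, hcomm, hdist⟩ := hloc F ε hε
    ⟨S.toNonUnitalSubalgebra, P, hfin, hPS, hP0, fun b hb => (hunit b hb).1, hcomm, hdist⟩
end
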